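/- Let σ be a permutation sorting |x| nonincreasingly and set w_k = Σ_{j∈C_k} λ_{σ⁻¹(j)}. Then J is linear on the manifold M: for every u = Σ_{k=1}^m c'_k v_k with c'_1, …, c'_m ∈ ℝ (c'_m = 0 if c_m = 0) and ‖u − x‖_∞ < ε_c/2, one has J(u) = Σ_{k=1}^m w_k · c'_k. -/

import Mathlib

open Finset Filter

noncomputable section

/-- The sign of a real number, with the convention `sgn 0 = 1`. -/
def sgn (t : ℝ) : ℝ := if t < 0 then -1 else 1

/-- A permutation sorting the absolute values of `β` in nonincreasing order. -/
def sortPerm {p : ℕ} (β : Fin p → ℝ) : Equiv.Perm (Fin p) :=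
  (Fin.revPerm).trans (Tuple.sort fun j => |β j|)

/-- The sorted ℓ₁ norm `J(β) = Σ_j λ_j |β|_(j)`. -/
def sortedL1 {p : ℕ} (lam β : Fin p → ℝ) : ℝ :=
  ∑ j, lam j * |β (sortPerm β j)|

/-- `β(z)`: the vector obtained from `β` by replacing entries of the cluster
`{i : |β i| = ck}` by `sign(β i) * z`. -/
def cupd {p : ℕ} (β : Fin p → ℝ) (ck z : ℝ) : Fin p → ℝ :=
  fun i => if |β i| = ck then sgn (β i) * z else β i

/-- The partial sorted ℓ₁ norm `H(z) = J(β(z))`. -/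
def Hfun {p : ℕ} (lam β : Fin p → ℝ) (ck : ℝ) (z : ℝ) : ℝ :=
  sortedL1 lam (cupd β ck z)

/-- `S(w) = Σ_{j ∈ C(w)} λ_{(j)⁻_w}`, where `C(w) = {j : |β(w)_j| = |w|}`. -/
def Sval {p : ℕ} (lam β : Fin p → ℝ) (ck : ℝ) (w : ℝ) : ℝ :=
  ∑ j, if |cupd β ck w j| = |w| then lam ((sortPerm (cupd β ck w))⁻¹ j) else 0

/-- squared Euclidean norm -/
def sqnorm {n : ℕ} (v : Fin n → ℝ) : ℝ := ∑ i, (v i) ^ 2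

/-- `G(z) = (1/2)‖y − Xβ(z)‖² + H(z)`. -/
def Gfun {n p : ℕ} (lam : Fin p → ℝ) (X : Matrix (Fin n) (Fin p) ℝ) (y : Fin n → ℝ)
    (β : Fin p → ℝ) (ck : ℝ) (z : ℝ) : ℝ :=
  (1/2) * sqnorm (fun i => y i - ∑ j, X i j * cupd β ck z j) + Hfun lam β ck z

/-- `x̃ = Σ_{j ∈ C_k} sign(β_j) X_{:j}`. -/
def xtil {n p : ℕ} (X : Matrix (Fin n) (Fin p) ℝ) (β : Fin p → ℝ) (ck : ℝ) : Fin n → ℝ :=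
  fun i => ∑ j, if |β j| = ck then sgn (β j) * X i j else 0

/-- `γ = c_k ω + x̃ᵀ r` where `r = y − Xβ` and `ω = ‖x̃‖²`. -/
def gam {n p : ℕ} (X : Matrix (Fin n) (Fin p) ℝ) (y : Fin n → ℝ) (β : Fin p → ℝ) (ck : ℝ) : ℝ :=
  ck * sqnorm (xtil X β ck) + ∑ i, xtil X β ck i * (y i - ∑ j, X i j * β j)

end

/-!
For `u = Σ_k c'_k v_k`, the absolute value of `u` is `|c'_k|` on the cluster `C_k`. The closeness of
`u` to `x` says that `c'` is within `ε_c / 2` of `c`. As `ε_c` is below every gap between the `c_k`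
and below every nonzero `c_k`, no two cluster values cross and none becomes negative. Hence a
permutation sorting `|x|` sorts `|u|` as well, `J(u)` can be evaluated along it, and grouping the
sum by clusters leaves a linear expression in `c'`.
-/

theorem abs_sgn (t : ℝ) : |sgn t| = 1 := by
  unfold sgn
  split_ifs <;> simp

theorem abs_mul_sgn (t : ℝ) : |t| * sgn t = t := by
  unfold sgn
  split_ifs with h
  · rw [abs_of_neg h, neg_mul_neg, mul_one]
  · rw [abs_of_nonneg (not_lt.mp h), mul_one]

theorem monovary_of_abs_sub_le_half {ι α : Type*} [Field α] [LinearOrder α] [IsStrictOrderedRing α]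
    {a c : ι → α} {ε : α} (hsep : ∀ i j, i ≠ j → ε ≤ |c i - c j|)
    (hclose : ∀ i, |a i - c i| ≤ ε / 2) : Monovary a c := by
  intro i j hij
  have hgap : ε ≤ c j - c i := by
    simpa only [abs_of_pos (sub_pos.mpr hij)] using hsep j i (ne_of_apply_ne c hij.ne')
  linarith [(abs_le.mp (hclose i)).2, (abs_le.mp (hclose j)).1]

theorem antitone_abs_sortPerm {p : ℕ} (β : Fin p → ℝ) : Antitone ((|β ·|) ∘ sortPerm β) :=
  (Tuple.monotone_sort (|β ·|)).comp_antitone Fin.rev_anti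

theorem sortedL1_eq_sum_of_antitone {p : ℕ} (lam : Fin p → ℝ) {β : Fin p → ℝ}
    {σ : Equiv.Perm (Fin p)} (hσ : Antitone fun j => |β (σ j)|) :
    sortedL1 lam β = ∑ j, lam (σ⁻¹ j) * |β j| := by
  have hsorted : (|β ·|) ∘ sortPerm β = (|β ·|) ∘ σ :=
    Tuple.unique_antitone (antitone_abs_sortPerm β) hσ
  calc sortedL1 lam β
    _ = ∑ j, lam j * |β (σ j)| := sum_congr rfl fun j _ => congrArg (lam j * ·) (congrFun hsorted j)
    _ = ∑ j, lam (σ⁻¹ j) * |β j| := by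
      simpa using Equiv.sum_comp σ fun j => lam (σ⁻¹ j) * |β j|

section

variable {ι : Type*} [Fintype ι] {p : ℕ}

/-- The vector `v` of the cluster `{j | |x j| = t}`: the signs of `x` on the cluster, zero
elsewhere. -/
noncomputable def clusterVec (x : Fin p → ℝ) (t : ℝ) : Fin p → ℝ :=
  fun j => if |x j| = t then sgn (x j) else 0

/-- The element `Σ_i a_i v_i` of the span of the cluster vectors of `x`, the clusters being indexed
by their values `c i`. -/
noncomputable def clusterComb (x : Fin p → ℝ) (c a : ι → ℝ) : Fin p → ℝ :=
  fun j => ∑ i, a i * clusterVec x (c i) j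

/-- The slope `w = Σ_{j ∈ C} λ_{σ⁻¹(j)}` of the cluster `C = {j | |x j| = t}`; here `σ` maps ranks
to coordinates, so `σ⁻¹ j` is the rank of the coordinate `j`. -/
noncomputable def clusterWeight (lam x : Fin p → ℝ) (σ : Equiv.Perm (Fin p)) (t : ℝ) : ℝ :=
  ∑ j, if |x j| = t then lam (σ⁻¹ j) else 0

variable {x : Fin p → ℝ} {c : ι → ℝ} {σ : Equiv.Perm (Fin p)}

theorem clusterComb_apply (hc : Function.Injective c) (a : ι → ℝ) {i : ι} {j : Fin p}
    (hj : |x j| = c i) : clusterComb x c a j = a i * sgn (x j) := by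
  classical
  simp [clusterComb, clusterVec, hj, hc.eq_iff]

theorem abs_clusterComb_apply (hc : Function.Injective c) (a : ι → ℝ) {i : ι} {j : Fin p}
    (hj : |x j| = c i) : |clusterComb x c a j| = |a i| := by
  rw [clusterComb_apply hc a hj, abs_mul, abs_sgn, mul_one]

theorem abs_clusterComb_sub_apply (hc : Function.Injective c) (a : ι → ℝ) {i : ι} {j : Fin p}
    (hj : |x j| = c i) : |clusterComb x c a j - x j| = |a i - c i| := by
  have hx : x j = c i * sgn (x j) := by rw [← hj, abs_mul_sgn]
  calc |clusterComb x c a j - x j|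
    _ = |(a i - c i) * sgn (x j)| := by rw [clusterComb_apply hc a hj, sub_mul, ← hx]
    _ = |a i - c i| := by rw [abs_mul, abs_sgn, mul_one]

theorem sum_clusterWeight_mul (hc : Function.Injective c) {k : Fin p → ι}
    (hk : ∀ j, |x j| = c (k j)) (lam : Fin p → ℝ) (a : ι → ℝ) :
    ∑ i, clusterWeight lam x σ (c i) * a i = ∑ j, lam (σ⁻¹ j) * a (k j) := by
  classical
  simp only [clusterWeight, sum_mul]
  rw [sum_comm]
  simp [hk, hc.eq_iff, ite_mul]

theorem antitone_abs_clusterComb (hc : Function.Injective c) (hcover : ∀ j, ∃ i, |x j| = c i)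
    (hσ : Antitone fun j => |x (σ j)|) {a : ι → ℝ} (ha : ∀ i, 0 ≤ a i) (hac : Monovary a c) :
    Antitone fun j => |clusterComb x c a (σ j)| := by
  intro j l hjl
  obtain ⟨i, hi⟩ := hcover (σ j)
  obtain ⟨i', hi'⟩ := hcover (σ l)
  have hle : c i' ≤ c i := hi ▸ hi' ▸ hσ hjl
  simp only [abs_clusterComb_apply hc a hi, abs_clusterComb_apply hc a hi', abs_of_nonneg (ha _)]
  rcases hle.eq_or_lt with heq | hlt
  · rw [hc heq]
  · exact hac hlt

theorem sortedL1_clusterComb_of_monovary (lam : Fin p → ℝ) (hc : Function.Injective c)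
    (hcover : ∀ j, ∃ i, |x j| = c i) (hσ : Antitone fun j => |x (σ j)|) {a : ι → ℝ}
    (ha : ∀ i, 0 ≤ a i) (hac : Monovary a c) :
    sortedL1 lam (clusterComb x c a) = ∑ i, clusterWeight lam x σ (c i) * a i := by
  choose k hk using hcover
  have hsorted := antitone_abs_clusterComb hc (fun j => ⟨k j, hk j⟩) hσ ha hac
  rw [sortedL1_eq_sum_of_antitone lam hsorted, sum_clusterWeight_mul hc hk]
  simp only [abs_clusterComb_apply hc a (hk _), abs_of_nonneg (ha _)]

theorem sorted_l1_linear_on_manifold_general (lam : Fin p → ℝ) (hc : Function.Injective c)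
    (hattain : ∀ i, ∃ j, |x j| = c i) (hcover : ∀ j, ∃ i, |x j| = c i) {ε : ℝ}
    (hsep : ∀ i j, i ≠ j → ε ≤ |c i - c j|) (hmin : ∀ i, c i ≠ 0 → ε ≤ c i)
    (hσ : Antitone fun j => |x (σ j)|) {a : ι → ℝ} (hzero : ∀ i, c i = 0 → 0 ≤ a i)
    (hclose : ∀ j, |clusterComb x c a j - x j| ≤ ε / 2) :
    sortedL1 lam (clusterComb x c a) = ∑ i, clusterWeight lam x σ (c i) * a i := by
  have hac : ∀ i, |a i - c i| ≤ ε / 2 := fun i => by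
    obtain ⟨j, hj⟩ := hattain i
    exact abs_clusterComb_sub_apply hc a hj ▸ hclose j
  have ha : ∀ i, 0 ≤ a i := fun i => by
    by_cases hi : c i = 0
    · exact hzero i hi
    · linarith [hmin i hi, (abs_le.mp (hac i)).1, abs_nonneg (a i - c i), hac i]
  exact sortedL1_clusterComb_of_monovary lam hc hcover hσ ha (monovary_of_abs_sub_le_half hsep hac)

end

/-- `J` is linear on the manifold `M`: for every `u = Σ_k c'_k v_k`
(with `c'_m = 0` if `c_m = 0`) satisfying `‖u − x‖_∞ < ε_c/2`, one has
`J(u) = Σ_k w_k c'_k`, where `w_k = Σ_{j ∈ C_k} λ_{σ⁻¹(j)}` for a permutation `σ`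
sorting `|x|` nonincreasingly. -/
theorem sorted_l1_linear_on_manifold
    {p m : ℕ} (hp : 0 < p) (hm : 0 < m)
    (lam : Fin p → ℝ)
    (hlam_mono : ∀ i j : Fin p, i ≤ j → lam j ≤ lam i)
    (hlam_nonneg : ∀ j, 0 ≤ lam j)
    (x : Fin p → ℝ) (c : Fin m → ℝ)
    (hc_anti : StrictAnti c) (hc_nonneg : ∀ i, 0 ≤ c i)
    (h_attain : ∀ i, ∃ j, |x j| = c i)
    (h_cover : ∀ j, ∃ i, |x j| = c i)
    (ε : ℝ) (hε_pos : 0 < ε)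
    (hε_sep : ∀ i j, i ≠ j → ε < |c i - c j|)
    (hε_min : ∀ i, c i ≠ 0 → ε < c i)
    (σ : Equiv.Perm (Fin p))
    (hσ : ∀ i j : Fin p, i ≤ j → |x (σ j)| ≤ |x (σ i)|)
    (c' : Fin m → ℝ)
    (hc'_zero : c ⟨m - 1, by omega⟩ = 0 → c' ⟨m - 1, by omega⟩ = 0)
    (u : Fin p → ℝ)
    (hu : u = fun j => ∑ i, c' i * (if |x j| = c i then sgn (x j) else 0))
    (h_close : ∀ j, |u j - x j| < ε / 2) :
    sortedL1 lam u = ∑ i, (∑ j, if |x j| = c i then lam (σ⁻¹ j) else 0) * c' i := by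
  have h_zero : ∀ i, c i = 0 → 0 ≤ c' i := fun i hi => by
    obtain rfl : i = ⟨m - 1, by omega⟩ :=
      le_antisymm (Nat.le_sub_one_of_lt i.isLt) (hc_anti.le_iff_ge.mp (hi.trans_le (hc_nonneg _)))
    exact (hc'_zero hi).ge
  subst hu
  exact sorted_l1_linear_on_manifold_general lam hc_anti.injective h_attain h_cover
    (fun i j hij => (hε_sep i j hij).le) (fun i hi => (hε_min i hi).le) hσ h_zero
    fun j => (h_close j).le
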